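/- Let G = (V, V_E, E, w, v_I) be a weighted arena and consider the mean-payoff MP(π) = liminf_{k→∞} (1/k)·∑_{i<k} w(π(i),π(i+1)). Let Ĝ be the weighted arena with vertex set V × P(E), where a vertex (v,D) belongs to Eve if and only if v ∈ V_E, with initial vertex (v_I, E), with an edge from (u,C) to (v,D) if and only if (u,v) ∈ C and either u ∈ V_E and D = C, or u ∉ V_E and D = C ∖ {(u,x) ∈ E : x ≠ v}, and with weight w(u,v) − cVal(G↾D) on this edge, where G↾D denotes the weighted arena (V, V_E, D, w, v_I). Then the regret of G under MP, where Eve may use any strategy and Adam is restricted to memoryless strategies, satisfies Reg(G; all Eve strategies, memoryless Adam strategies) = −aVal(Ĝ), where aVal(Ĝ) is the antagonistic value of Ĝ under MP. -/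

import Mathlib

/-!
A vertex `(v, D)` of `Ĝ` records in `D` the edges of `G` that remain possible for Adam if he never
revises an earlier choice. The infinite paths of `Ĝ` are therefore exactly the lifts of the paths
`π` of `G` along which Adam is positional (`hat_isPath_iff`). The second components along such a
lift decrease in a finite lattice, so they are eventually equal to the set `D∞` (`compatLim`) of
edges compatible with everything Adam does along `π`. Changing finitely many weights does not
matter for the mean-payoff, whence the lift of `π` has payoff `MP(π) - cVal(G↾D∞)` (`MPVal_lift`).

Eve's strategies in `G` and in `Ĝ` can be matched so that they are followed by the same paths
(`exists_matched_hat`, `exists_matched`). For a matched pair, the worst regret in `G` is minus the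
worst payoff in `Ĝ` (`regret_eq_of_matched`). Indeed, let `π` be the play of `σ` against a memoryless
`τ`. Every other play against `τ` stays in `G↾D∞`, so the best response to `τ` earns at most
`cVal(G↾D∞)`. Conversely, `cVal(G↾D∞)` is the supremum of the payoffs of positional paths `ρ` of
`G↾D∞`, and for each of these some memoryless `τ` yields `π` against `σ` and `ρ` against a
suitable strategy of Eve (`exists_memoryless`).

That positional paths suffice for the cooperative value is the classical cycle decomposition
(`mean_le_of_positional`): if `M` bounds the payoffs of all positional paths, then the first cycle
closed by any path has mean at most `M`, since the lasso around it is positional, and cutting out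
cycles bounds every partial sum by `M * k` plus a constant.
-/

open Filter
open scoped Classical

/-- A weighted arena `(V, V_∃, E, w, v_I)`: `VE` is the set of vertices owned
by Eve (the rest belong to Adam), `E` is the edge relation, `w` the weight
function (only relevant on edges), and `init` the initial vertex. -/
structure Arena (V : Type) where
  VE : Set V
  E : V → V → Prop
  w : V → V → ℝ
  init : V

namespace Arena

variable {V : Type} (A : Arena V)

/-- The arena is total: every vertex has an outgoing edge. -/
def Total : Prop := ∀ v, ∃ u, A.E v u

/-- `l` is a finite `E`-path from the initial vertex ending in `v`. -/
def IsHist (l : List V) (v : V) : Prop :=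
  l.Chain' A.E ∧ l.head? = some A.init ∧ l.getLast? = some v

/-- A strategy for Eve: on every history ending in a vertex of Eve it picks a
successor of that vertex. -/
def EveStrat (σ : List V → V) : Prop :=
  ∀ l v, A.IsHist l v → v ∈ A.VE → A.E v (σ l)

/-- A strategy for Adam: on every history ending in a vertex of Adam it picks
a successor of that vertex. -/
def AdamStrat (τ : List V → V) : Prop :=
  ∀ l v, A.IsHist l v → v ∉ A.VE → A.E v (τ l)

/-- The prefixes (histories) of the unique play consistent with `σ` and `τ`. -/
noncomputable def hist (σ τ : List V → V) : ℕ → List V := fun n =>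
  Nat.rec [A.init]
    (fun _ l => l ++ [if l.getLastD A.init ∈ A.VE then σ l else τ l]) n

/-- The unique play consistent with `σ` and `τ`. -/
noncomputable def play (σ τ : List V → V) (n : ℕ) : V :=
  (A.hist σ τ n).getLastD A.init

/-- The `Inf` payoff of a play: the infimum of the weights seen. -/
noncomputable def InfVal (π : ℕ → V) : ℝ := ⨅ i : ℕ, A.w (π i) (π (i + 1))

/-- The `Sup` payoff of a play: the supremum of the weights seen. -/
noncomputable def SupVal (π : ℕ → V) : ℝ := ⨆ i : ℕ, A.w (π i) (π (i + 1))

/-- The `LimInf` payoff of a play. -/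
noncomputable def LimInfVal (π : ℕ → V) : ℝ :=
  Filter.liminf (fun i : ℕ => A.w (π i) (π (i + 1))) atTop

/-- The `LimSup` payoff of a play. -/
noncomputable def LimSupVal (π : ℕ → V) : ℝ :=
  Filter.limsup (fun i : ℕ => A.w (π i) (π (i + 1))) atTop

/-- The mean-payoff (defined with `liminf`) of a play. -/
noncomputable def MPVal (π : ℕ → V) : ℝ :=
  Filter.liminf
    (fun k : ℕ => (∑ i ∈ Finset.range k, A.w (π i) (π (i + 1))) / k) atTop

/-- The mean-payoff (defined with `limsup`) of a play. -/
noncomputable def MPBarVal (π : ℕ → V) : ℝ :=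
  Filter.limsup
    (fun k : ℕ => (∑ i ∈ Finset.range k, A.w (π i) (π (i + 1))) / k) atTop

/-- The regret of the arena w.r.t. a payoff `val`, where Eve's strategies are
restricted by `PE` and Adam's by `PA`. -/
noncomputable def regretPP (val : (ℕ → V) → ℝ)
    (PE PA : (List V → V) → Prop) : ℝ :=
  ⨅ σ : {σ : List V → V // A.EveStrat σ ∧ PE σ},
    ⨆ τ : {τ : List V → V // A.AdamStrat τ ∧ PA τ},
      ((⨆ σ' : {σ' : List V → V // A.EveStrat σ' ∧ PE σ'},
          val (A.play σ'.1 τ.1)) - val (A.play σ.1 τ.1))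

/-- The regret of the arena w.r.t. a payoff `val`, both players unrestricted. -/
noncomputable def regret (val : (ℕ → V) → ℝ) : ℝ :=
  A.regretPP val (fun _ => True) (fun _ => True)

/-- The antagonistic value. -/
noncomputable def aVal (val : (ℕ → V) → ℝ) : ℝ :=
  ⨆ σ : {σ : List V → V // A.EveStrat σ},
    ⨅ τ : {τ : List V → V // A.AdamStrat τ}, val (A.play σ.1 τ.1)

/-- The cooperative value. -/
noncomputable def cVal (val : (ℕ → V) → ℝ) : ℝ :=
  ⨆ σ : {σ : List V → V // A.EveStrat σ},
    ⨆ τ : {τ : List V → V // A.AdamStrat τ}, val (A.play σ.1 τ.1)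

/-- The same arena with the initial vertex moved to `v`. -/
def withInit (v : V) : Arena V := { A with init := v }

end Arena

/-- A memoryless (positional) strategy: its value depends only on the last
vertex of the history. -/
def Memoryless {V : Type} (s : List V → V) : Prop :=
  ∃ f : V → V, ∀ (l : List V) (v : V), l.getLast? = some v → s l = f v

/-- The arena `G ↾ D`: `G` restricted to the set `D` of edges. -/
def restrictE {V : Type} (A : Arena V) (D : Set (V × V)) : Arena V :=
  { A with E := fun u v => (u, v) ∈ D }

/-- The arena `Ĝ` of Lemma 8: vertices are pairs `(v, C)` of a vertex of `G`
and a set `C` of edges (those still consistent with Adam's positional choices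
so far); `(v, C)` belongs to Eve iff `v` does; the initial vertex is
`(v_I, E)`; there is an edge from `(u, C)` to `(v, D)` iff `(u, v) ∈ C` and
either `u` is Eve's and `D = C`, or `u` is Adam's and
`D = C ∖ {(u, x) ∈ E : x ≠ v}`; its weight is `w(u,v) - cVal(G ↾ D)` (for the
mean-payoff). -/
noncomputable def hatArenaMem {V : Type} (A : Arena V) :
    Arena (V × Set (V × V)) where
  VE := {p | p.1 ∈ A.VE}
  E := fun p q =>
    (p.1, q.1) ∈ p.2 ∧
      ((p.1 ∈ A.VE ∧ q.2 = p.2) ∨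
       (p.1 ∉ A.VE ∧ q.2 = p.2 \ {e : V × V | e.1 = p.1 ∧ e.2 ≠ q.1}))
  w := fun p q =>
    A.w p.1 q.1 - (restrictE A q.2).cVal ((restrictE A q.2).MPVal)
  init := (A.init, {e | A.E e.1 e.2})

namespace MemRegret

/-! ### Limit inferior of averages -/

/-- The average of the first `k` terms of `a`, with the junk value `0` at `k = 0`. -/
noncomputable def avg (a : ℕ → ℝ) (k : ℕ) : ℝ := (∑ i ∈ Finset.range k, a i) / k

lemma abs_avg_le {a : ℕ → ℝ} {W : ℝ} (h : ∀ i, |a i| ≤ W) (k : ℕ) : |avg a k| ≤ W := by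
  have hW : 0 ≤ W := (abs_nonneg _).trans (h 0)
  rcases Nat.eq_zero_or_pos k with rfl | hk
  · simpa [avg] using hW
  · have hk' : (0 : ℝ) < k := by exact_mod_cast hk
    rw [avg, abs_div, abs_of_pos hk', div_le_iff₀ hk']
    calc |∑ i ∈ Finset.range k, a i| ≤ ∑ i ∈ Finset.range k, |a i| :=
          Finset.abs_sum_le_sum_abs _ _
      _ ≤ ∑ _i ∈ Finset.range k, W := Finset.sum_le_sum fun i _ => h i
      _ = W * k := by simp [mul_comm]

lemma isBounded_avg {a : ℕ → ℝ} {W : ℝ} (h : ∀ i, |a i| ≤ W) :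
    IsBoundedUnder (· ≥ ·) atTop (avg a) :=
  isBoundedUnder_of ⟨-W, fun k => (abs_le.1 (abs_avg_le h k)).1⟩

lemma isCobounded_avg {a : ℕ → ℝ} {W : ℝ} (h : ∀ i, |a i| ≤ W) :
    IsCoboundedUnder (· ≥ ·) atTop (avg a) :=
  (isBoundedUnder_of ⟨W, fun k => (abs_le.1 (abs_avg_le h k)).2⟩ :
    IsBoundedUnder (· ≤ ·) atTop (avg a)).isCoboundedUnder_ge

lemma abs_liminf_avg_le {a : ℕ → ℝ} {W : ℝ} (h : ∀ i, |a i| ≤ W) :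
    |liminf (avg a) atTop| ≤ W := by
  rw [abs_le]
  constructor
  · exact le_liminf_of_le (isCobounded_avg h)
      (Eventually.of_forall fun k => (abs_le.1 (abs_avg_le h k)).1)
  · exact liminf_le_of_frequently_le
      (Eventually.of_forall fun k => (abs_le.1 (abs_avg_le h k)).2).frequently (isBounded_avg h)

/-- Partial sums that compare up to a linear term and a bounded error yield
limit-inferior averages that compare up to the slope. -/
lemma liminf_avg_le_add {a b : ℕ → ℝ} {W W' c C : ℝ} (ha : ∀ i, |a i| ≤ W)
    (hb : ∀ i, |b i| ≤ W')
    (h : ∀ k : ℕ, ∑ i ∈ Finset.range k, b i ≤ ∑ i ∈ Finset.range k, a i + c * k + C) :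
    liminf (avg b) atTop ≤ liminf (avg a) atTop + c := by
  refine le_of_forall_pos_le_add fun ε hε => ?_
  rw [add_assoc, ← liminf_add_const atTop (avg a) (c + ε) (isCobounded_avg ha) (isBounded_avg ha)]
  refine liminf_le_liminf ?_ (isBounded_avg hb) ?_
  · have hC : Tendsto (fun k : ℕ => C / (k : ℝ)) atTop (nhds 0) :=
      tendsto_const_div_atTop_nhds_zero_nat C
    filter_upwards [hC.eventually (gt_mem_nhds hε), eventually_gt_atTop 0] with k hk hk0
    have hk' : (0 : ℝ) < k := by exact_mod_cast hk0
    have := div_le_div_of_nonneg_right (h k) hk'.le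
    rw [add_div, add_div, mul_div_cancel_right₀ _ hk'.ne'] at this
    unfold avg
    linarith
  · exact (isBoundedUnder_of ⟨W + (c + ε), fun k => by
      have := (abs_le.1 (abs_avg_le ha k)).2
      simpa using this⟩ :
      IsBoundedUnder (· ≤ ·) atTop (fun k => avg a k + (c + ε))).isCoboundedUnder_ge

lemma avg_zero : avg (fun _ => 0) = fun _ => 0 := by
  funext k; simp [avg]

lemma liminf_avg_le {b : ℕ → ℝ} {W' c C : ℝ} (hb : ∀ i, |b i| ≤ W')
    (h : ∀ k : ℕ, ∑ i ∈ Finset.range k, b i ≤ c * k + C) :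
    liminf (avg b) atTop ≤ c := by
  have := liminf_avg_le_add (a := fun _ => 0) (W := 0) (c := c) (C := C) (by simp) hb
    (by simpa using h)
  simpa [avg_zero] using this

lemma le_liminf_avg {a : ℕ → ℝ} {W c C : ℝ} (ha : ∀ i, |a i| ≤ W)
    (h : ∀ k : ℕ, c * k ≤ ∑ i ∈ Finset.range k, a i + C) :
    c ≤ liminf (avg a) atTop := by
  have := liminf_avg_le_add (b := fun _ => 0) (W' := 0) (c := -c) (C := C) ha (by simp)
    (by intro k; have := h k; simp; linarith)
  simp [avg_zero] at this
  linarith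

lemma liminf_avg_shift {a b : ℕ → ℝ} {W W' c : ℝ} (ha : ∀ i, |a i| ≤ W)
    (hb : ∀ i, |b i| ≤ W') (N : ℕ) (h : ∀ i, N ≤ i → b i = a i - c) :
    liminf (avg b) atTop = liminf (avg a) atTop - c := by
  have key : ∀ k : ℕ, |∑ i ∈ Finset.range k, (b i - a i + c)|
      ≤ ∑ i ∈ Finset.range N, |b i - a i + c| := by
    intro k
    refine (Finset.abs_sum_le_sum_abs _ _).trans ?_
    rw [← Finset.sum_subset (Finset.inter_subset_left (s₂ := Finset.range N))]
    · exact Finset.sum_le_sum_of_subset_of_nonneg Finset.inter_subset_right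
        fun _ _ _ => abs_nonneg _
    · intro i hi hi'
      have : N ≤ i := by
        by_contra hlt
        exact hi' (Finset.mem_inter.2 ⟨hi, Finset.mem_range.2 (not_le.1 hlt)⟩)
      rw [h i this]; simp
  have key' : ∀ k : ℕ, ∑ i ∈ Finset.range k, (b i - a i + c) =
      ∑ i ∈ Finset.range k, b i - ∑ i ∈ Finset.range k, a i + c * k := by
    intro k; simp [Finset.sum_add_distrib, Finset.sum_sub_distrib, mul_comm]
  apply le_antisymm
  · have := liminf_avg_le_add (c := -c) (C := ∑ i ∈ Finset.range N, |b i - a i + c|) ha hb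
      (by intro k; have := (abs_le.1 (key k)).2; rw [key'] at this; linarith)
    linarith
  · have := liminf_avg_le_add (c := c) (C := ∑ i ∈ Finset.range N, |b i - a i + c|) hb ha
      (by intro k; have := (abs_le.1 (key k)).1; rw [key'] at this; linarith)
    linarith

/-! ### Positional paths attain the best mean-payoff -/

section Cycle
variable {V : Type} (E : V → V → Prop) (w : V → V → ℝ) (v₀ : V)

/-- `π` is an infinite `E`-path starting in `v₀`. -/
def IsPath (π : ℕ → V) : Prop := π 0 = v₀ ∧ ∀ i, E (π i) (π (i + 1))

/-- The sequence of weights along `π`. -/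
def wt (π : ℕ → V) (i : ℕ) : ℝ := w (π i) (π (i + 1))

/-- The successor in `π` of a vertex outside `S` is determined by the vertex. -/
def Positional (S : Set V) (π : ℕ → V) : Prop :=
  ∀ i j, π i = π j → π i ∉ S → π (i + 1) = π (j + 1)

end Cycle

lemma exists_bound {V : Type} [Finite V] (w : V → V → ℝ) : ∃ W, ∀ u v, |w u v| ≤ W := by
  obtain ⟨W, hW⟩ := (Set.finite_range fun p : V × V => |w p.1 p.2|).bddAbove
  exact ⟨W, fun u v => hW ⟨(u, v), rfl⟩⟩

/-- The index of a lasso: it counts up to `j - 1` and then jumps back to `i`. -/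
def lasso (i j : ℕ) : ℕ → ℕ
  | 0 => 0
  | n + 1 => if lasso i j n + 1 < j then lasso i j n + 1 else i

lemma lasso_lt {i j : ℕ} (hij : i < j) (n : ℕ) : lasso i j n < j := by
  induction n with
  | zero => simp [lasso]; omega
  | succ n ih => rw [lasso]; split_ifs <;> omega

lemma lasso_of_lt {i j : ℕ} (n : ℕ) (hn : n < j) : lasso i j n = n := by
  induction n with
  | zero => rfl
  | succ n ih => rw [lasso, ih (by omega), if_pos hn]

lemma lasso_period {i j : ℕ} (hij : i < j) (m : ℕ) :
    lasso i j (i + m + (j - i)) = lasso i j (i + m) := by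
  induction m with
  | zero =>
    obtain ⟨j, rfl⟩ : ∃ k, j = k + 1 := ⟨j - 1, by omega⟩
    rw [show i + 0 + (j + 1 - i) = j + 1 by omega, lasso, lasso_of_lt j (by omega),
      if_neg (by omega), lasso_of_lt _ (by omega)]; rfl
  | succ m ih =>
    rw [show i + (m + 1) + (j - i) = (i + m + (j - i)) + 1 by omega, lasso, ih,
      show i + (m + 1) = (i + m) + 1 by omega, lasso]

lemma lasso_step {V : Type} {π : ℕ → V} {i j : ℕ} (hij : i < j) (h : π i = π j) (n : ℕ) :
    π (lasso i j (n + 1)) = π (lasso i j n + 1) := by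
  rw [lasso]
  split_ifs with h'
  · rfl
  · have := lasso_lt hij n
    rw [h]; congr 1; omega

/-- The mean weight of a sequence that is periodic from `i` on is bounded by the limit
inferior of its averages. -/
lemma periodic_le {a : ℕ → ℝ} {W M : ℝ} (ha : ∀ n, |a n| ≤ W) {i p : ℕ} (hp : 0 < p)
    (hper : ∀ m, a (i + m + p) = a (i + m)) (hM : liminf (avg a) atTop ≤ M) :
    ∑ n ∈ Finset.range p, a (i + n) ≤ p * M := by
  have hp' : (0 : ℝ) < p := by exact_mod_cast hp
  set c := (∑ n ∈ Finset.range p, a (i + n)) / p with hc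
  suffices h : c ≤ M by
    rw [hc, div_le_iff₀ hp'] at h; linarith
  refine le_trans ?_ hM
  -- over one period the partial sums of `a` grow by exactly `c * p`
  have hcyc : ∀ m, ∑ n ∈ Finset.range p, a (i + m + n) = c * p := by
    intro m
    induction m with
    | zero => rw [hc, div_mul_cancel₀ _ hp'.ne']; simp
    | succ m ih =>
      rw [← ih]
      have e1 := Finset.sum_range_succ (fun n => a (i + m + n)) p
      have e2 := Finset.sum_range_succ' (fun n => a (i + m + n)) p
      have e3 : ∑ n ∈ Finset.range p, a (i + (m + 1) + n)
          = ∑ n ∈ Finset.range p, a (i + m + (n + 1)) :=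
        Finset.sum_congr rfl fun n _ => by congr 1; omega
      have e4 := hper m
      simp only [add_zero] at e1 e2
      linarith
  set C := ∑ n ∈ Finset.range (i + p), |c * n - ∑ l ∈ Finset.range n, a l| with hC
  refine le_liminf_avg (C := C) ha fun k => ?_
  induction k using Nat.strong_induction_on with
  | _ k ih =>
    by_cases hk : k < i + p
    · have := Finset.single_le_sum
        (f := fun n : ℕ => |c * n - ∑ l ∈ Finset.range n, a l|)
        (fun _ _ => abs_nonneg _) (Finset.mem_range.2 hk)
      have h2 := le_abs_self (c * k - ∑ l ∈ Finset.range k, a l)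
      linarith
    · obtain ⟨m, rfl⟩ : ∃ m, k = i + m + p := ⟨k - i - p, by omega⟩
      rw [Finset.sum_range_add, hcyc]
      have := ih (i + m) (by omega)
      push_cast at this ⊢
      linarith

/-- Every path revisits a vertex within its first `Nat.card V` steps, and up to the first
revisit it is injective. -/
lemma exists_first_repeat {V : Type} [Finite V] (π : ℕ → V) :
    ∃ i j, i < j ∧ j ≤ Nat.card V ∧ π i = π j ∧
      ∀ a b, a < j → b < j → π a = π b → a = b := by
  have hex : ∃ j, ∃ i, i < j ∧ π i = π j := by
    obtain ⟨x, y, hne, h⟩ := Finite.exists_ne_map_eq_of_infinite π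
    rcases lt_or_gt_of_ne hne with h' | h'
    exacts [⟨y, x, h', h⟩, ⟨x, y, h', h.symm⟩]
  obtain ⟨i, hij, h⟩ := Nat.find_spec hex
  have hinj : ∀ a b, a < Nat.find hex → b < Nat.find hex → π a = π b → a = b := by
    intro a b ha hb hab
    by_contra hne
    rcases lt_or_gt_of_ne hne with h' | h'
    · exact Nat.find_min hex hb ⟨a, h', hab⟩
    · exact Nat.find_min hex ha ⟨b, h', hab.symm⟩
  refine ⟨i, _, hij, ?_, h, hinj⟩
  have := Nat.card_le_card_of_injective (fun x : Fin (Nat.find hex) => π x)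
    fun x y hxy => Fin.ext (hinj _ _ x.2 y.2 hxy)
  simpa using this

/-- Cycle decomposition: if all positional paths from `v₀` have mean-payoff at most `M`, then so
does every path from `v₀`. The first cycle closed by a path has mean at most `M`, because the lasso
around it is positional; cutting such cycles out one after another bounds every partial sum. -/
lemma mean_le_of_positional {V : Type} [Finite V] {E : V → V → Prop} (w : V → V → ℝ) {v₀ : V}
    {M : ℝ} (hM : ∀ ρ, IsPath E v₀ ρ → Positional ∅ ρ → liminf (avg (wt w ρ)) atTop ≤ M)
    (π : ℕ → V) (hπ : IsPath E v₀ π) : liminf (avg (wt w π)) atTop ≤ M := by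
  obtain ⟨W, hW⟩ := exists_bound w
  have hW0 : 0 ≤ W := (abs_nonneg _).trans (hW v₀ v₀)
  set C : ℝ := Nat.card V * (W + |M|) with hC
  suffices h : ∀ k : ℕ, ∀ π, IsPath E v₀ π →
      ∑ n ∈ Finset.range k, wt w π n ≤ M * k + C from
    liminf_avg_le (fun i => hW _ _) fun k => h k π hπ
  intro k
  induction k using Nat.strong_induction_on with
  | _ k ih =>
    intro π hπ
    by_cases hk : k ≤ Nat.card V
    · have h1 : ∑ n ∈ Finset.range k, wt w π n ≤ ∑ _n ∈ Finset.range k, W :=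
        Finset.sum_le_sum fun n _ => (le_abs_self _).trans (hW _ _)
      have h2 : (k : ℝ) ≤ Nat.card V := by exact_mod_cast hk
      have h3 : (k : ℝ) * (W + |M|) ≤ C :=
        mul_le_mul_of_nonneg_right h2 (by positivity)
      have h4 : -(M * k) ≤ k * |M| := by
        rw [← neg_mul, mul_comm (k : ℝ)]
        exact mul_le_mul_of_nonneg_right (neg_le_abs M) (Nat.cast_nonneg k)
      simp at h1
      linarith
    · obtain ⟨i, j, hij, hj, hrep, hinj⟩ := exists_first_repeat π
      -- the lasso around the first cycle
      have hcyc : ∑ n ∈ Finset.range (j - i), wt w π (i + n) ≤ (j - i : ℕ) * M := by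
        have hρ := hM (fun n => π (lasso i j n))
          ⟨hπ.1, fun n => by
            change E (π (lasso i j n)) (π (lasso i j (n + 1)))
            rw [lasso_step hij hrep]; exact hπ.2 _⟩
          (fun a b hab _ => by
            have := hinj _ _ (lasso_lt hij a) (lasso_lt hij b) hab
            simp only [lasso_step hij hrep, this])
        have := periodic_le (i := i) (p := j - i) (fun n => hW _ _) (by omega) (fun m => by
          simp only [lasso_step hij hrep, lasso_period hij]) hρ
        refine le_trans (le_of_eq (Finset.sum_congr rfl fun n hn => ?_)) this
        rw [Finset.mem_range] at hn
        simp only [wt, lasso_step hij hrep]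
        rw [lasso_of_lt _ (by omega)]
      -- the path with the cycle cut out
      set p := j - i with hp
      set π' : ℕ → V := fun m => if m ≤ i then π m else π (m + p) with hπ'
      have hlo : ∀ n, n < i → wt w π' n = wt w π n := by
        intro n hn
        simp only [wt, hπ', if_pos hn.le, if_pos (Nat.succ_le_of_lt hn)]
      have hge : ∀ m, i ≤ m → π' m = π (m + p) := by
        intro m hm
        rcases hm.eq_or_lt with rfl | hm
        · simp only [hπ', le_refl, if_true, hrep]; congr 1; omega
        · simp only [hπ', if_neg (not_le.2 hm)]
      have hpath : IsPath E v₀ π' := by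
        refine ⟨by simpa [hπ'] using hπ.1, fun n => ?_⟩
        by_cases hn : n < i
        · simp only [hπ', if_pos hn.le, if_pos (Nat.succ_le_of_lt hn)]; exact hπ.2 n
        · rw [hge n (by omega), hge (n + 1) (by omega),
            show n + 1 + p = n + p + 1 by omega]
          exact hπ.2 _
      obtain ⟨r, rfl⟩ : ∃ r, k = i + p + r := ⟨k - i - p, by omega⟩
      have hrec := ih (i + r) (by omega) π' hpath
      rw [Finset.sum_range_add, Finset.sum_congr rfl
        (fun n hn => hlo n (Finset.mem_range.1 hn))] at hrec
      have htail : ∑ n ∈ Finset.range r, wt w π' (i + n)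
          = ∑ n ∈ Finset.range r, wt w π (i + p + n) := by
        refine Finset.sum_congr rfl fun n _ => ?_
        simp only [wt]
        rw [hge _ (by omega), hge _ (by omega), show i + n + p = i + p + n by omega,
          show i + n + 1 + p = i + p + n + 1 by omega]
      rw [htail] at hrec
      rw [Finset.sum_range_add, Finset.sum_range_add]
      push_cast at hrec ⊢
      linarith

/-! ### Plays as infinite paths -/

section Plays
variable {V : Type}

/-- The prefix `π 0, …, π n` of an infinite sequence. -/
def pre (π : ℕ → V) (n : ℕ) : List V := (List.range (n + 1)).map π

lemma pre_succ (π : ℕ → V) (n : ℕ) : pre π (n + 1) = pre π n ++ [π (n + 1)] := by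
  rw [pre, List.range_succ, List.map_append]; rfl

lemma pre_getLast? (π : ℕ → V) (n : ℕ) : (pre π n).getLast? = some (π n) := by
  cases n with
  | zero => rfl
  | succ n => rw [pre_succ]; simp

lemma pre_getLastD (π : ℕ → V) (n : ℕ) (d : V) : (pre π n).getLastD d = π n := by
  rw [List.getLastD_eq_getLast?, pre_getLast?]; rfl

lemma pre_length (π : ℕ → V) (n : ℕ) : (pre π n).length = n + 1 := by simp [pre]

lemma pre_congr {π π' : ℕ → V} {n : ℕ} (h : ∀ i ≤ n, π i = π' i) : pre π n = pre π' n :=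
  List.map_congr_left fun i hi => h i (by rw [List.mem_range] at hi; omega)

lemma pre_inj {π π' : ℕ → V} {n : ℕ} (h : pre π n = pre π' n) : ∀ i ≤ n, π i = π' i := by
  intro i hi
  exact List.map_inj_left.1 h i (List.mem_range.2 (by omega))

variable (A : Arena V)

lemma isHist_pre_iff {π : ℕ → V} {n : ℕ} {v : V} :
    A.IsHist (pre π n) v ↔ (∀ i < n, A.E (π i) (π (i + 1))) ∧ π 0 = A.init ∧ π n = v := by
  rw [Arena.IsHist, pre_getLast?]
  have h1 : (pre π n).head? = some (π 0) := by
    rw [pre, List.range_succ_eq_map]; rfl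
  have h2 : List.IsChain A.E (pre π n) ↔ ∀ i < n, A.E (π i) (π (i + 1)) := by
    rw [pre, List.isChain_map]
    exact List.isChain_range_succ _ n
  change List.IsChain A.E (pre π n) ∧ _ ↔ _
  rw [h1, h2]; simp

lemma exists_pre_of_isHist {l : List V} {v : V} (h : A.IsHist l v) : ∃ π n, l = pre π n := by
  have hne : l ≠ [] := by
    rintro rfl; simp [Arena.IsHist] at h
  have hpos := List.length_pos_iff.2 hne
  refine ⟨fun i => l.getD i v, l.length - 1, ?_⟩
  apply List.ext_getElem
  · rw [pre_length]; omega
  · intro i h1 h2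
    simp [pre, h1]

lemma play_zero (σ τ : List V → V) : A.play σ τ 0 = A.init := rfl

lemma hist_succ (σ τ : List V → V) (n : ℕ) :
    A.hist σ τ (n + 1) = A.hist σ τ n ++ [A.play σ τ (n + 1)] := by
  simp [Arena.play, Arena.hist]

lemma hist_eq_pre (σ τ : List V → V) (n : ℕ) : A.hist σ τ n = pre (A.play σ τ) n := by
  induction n with
  | zero => rfl
  | succ n ih => rw [hist_succ, ih, pre_succ]

lemma play_succ (σ τ : List V → V) (n : ℕ) : A.play σ τ (n + 1) =
    if A.play σ τ n ∈ A.VE then σ (pre (A.play σ τ) n) else τ (pre (A.play σ τ) n) := by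
  rw [← hist_eq_pre]
  change (A.hist σ τ n ++ [if A.play σ τ n ∈ A.VE then σ (A.hist σ τ n)
    else τ (A.hist σ τ n)]).getLastD A.init = _
  simp

lemma play_unique {σ τ : List V → V} {π : ℕ → V} (h0 : π 0 = A.init)
    (h : ∀ n, π (n + 1) = if π n ∈ A.VE then σ (pre π n) else τ (pre π n)) :
    A.play σ τ = π := by
  have key : ∀ n, ∀ i ≤ n, A.play σ τ i = π i := by
    intro n
    induction n with
    | zero =>
      intro i hi
      obtain rfl : i = 0 := by omega
      rw [play_zero, h0]
    | succ n ih =>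
      intro i hi
      rcases hi.eq_or_lt with rfl | hi
      · rw [play_succ, h, pre_congr ih, ih n le_rfl]
      · exact ih i (by omega)
  funext n
  exact key n n le_rfl

/-- The play `π` follows the Eve strategy `σ`. -/
def Follows (σ : List V → V) (π : ℕ → V) : Prop :=
  ∀ i, π i ∈ A.VE → π (i + 1) = σ (pre π i)

/-- Every history can be prolonged. This is weaker than totality, and it is the property that
`Ĝ` inherits from `G`. -/
def Prolongs : Prop := ∀ l v, A.IsHist l v → ∃ u, A.E v u

variable {A}

lemma follows_play (σ τ : List V → V) : Follows A σ (A.play σ τ) := by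
  intro i hi; rw [play_succ, if_pos hi]

lemma play_edge {σ τ : List V → V} (hσ : A.EveStrat σ) (hτ : A.AdamStrat τ) (n : ℕ) :
    A.E (A.play σ τ n) (A.play σ τ (n + 1)) := by
  induction n using Nat.strong_induction_on with
  | _ n ih =>
    have hh : A.IsHist (pre (A.play σ τ) n) (A.play σ τ n) :=
      (isHist_pre_iff A).2 ⟨ih, rfl, rfl⟩
    rw [play_succ]
    split_ifs with h
    exacts [hσ _ _ hh h, hτ _ _ hh h]

lemma isPath_play {σ τ : List V → V} (hσ : A.EveStrat σ) (hτ : A.AdamStrat τ) :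
    IsPath A.E A.init (A.play σ τ) := ⟨rfl, play_edge hσ hτ⟩

lemma exists_next (hA : Prolongs A) :
    ∃ s : List V → V, ∀ l v, A.IsHist l v → A.E v (s l) := by
  have : ∀ l, ∃ u, ∀ v, A.IsHist l v → A.E v u := by
    intro l
    by_cases hv : ∃ v, A.IsHist l v
    · obtain ⟨v, hv⟩ := hv
      obtain ⟨u, hu⟩ := hA l v hv
      refine ⟨u, fun v' hv' => ?_⟩
      have : v = v' := by
        have := hv.2.2.symm.trans hv'.2.2
        simpa using this
      rwa [← this]
    · exact ⟨A.init, fun v h => (hv ⟨v, h⟩).elim⟩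
  choose s hs using this
  exact ⟨s, hs⟩

/-- A single function that is a strategy for either player and that produces a given path. -/
lemma exists_strat (hA : Prolongs A) {π : ℕ → V} (hπ : IsPath A.E A.init π) :
    ∃ s : List V → V, A.EveStrat s ∧ A.AdamStrat s ∧ ∀ n, s (pre π n) = π (n + 1) := by
  obtain ⟨s₀, hs₀⟩ := exists_next hA
  have : ∀ l, ∃ u, (∀ v, A.IsHist l v → A.E v u) ∧ ∀ n, l = pre π n → u = π (n + 1) := by
    intro l
    by_cases hl : ∃ n, l = pre π n
    · obtain ⟨n, rfl⟩ := hl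
      refine ⟨π (n + 1), fun v hv => ?_, fun m hm => ?_⟩
      · rw [← ((isHist_pre_iff A).1 hv).2.2]; exact hπ.2 n
      · have := congrArg List.length hm
        rw [pre_length, pre_length] at this
        rw [this]
    · exact ⟨s₀ l, hs₀ l, fun n hn => (hl ⟨n, hn⟩).elim⟩
  choose s hs using this
  exact ⟨s, fun l v h _ => (hs l).1 v h, fun l v h _ => (hs l).1 v h,
    fun n => (hs _).2 n rfl⟩

lemma exists_adam (hA : Prolongs A) {σ : List V → V} {π : ℕ → V} (hπ : IsPath A.E A.init π)
    (hσ : Follows A σ π) : ∃ τ, A.AdamStrat τ ∧ A.play σ τ = π := by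
  obtain ⟨s, -, hs, hsπ⟩ := exists_strat hA hπ
  refine ⟨s, hs, play_unique A hπ.1 fun n => ?_⟩
  split_ifs with h
  exacts [hσ n h, (hsπ n).symm]

lemma exists_eve (hA : Prolongs A) {τ : List V → V} {π : ℕ → V} (hπ : IsPath A.E A.init π)
    (hτ : ∀ i, π i ∉ A.VE → π (i + 1) = τ (pre π i)) :
    ∃ σ, A.EveStrat σ ∧ A.play σ τ = π := by
  obtain ⟨s, hs, -, hsπ⟩ := exists_strat hA hπ
  refine ⟨s, hs, play_unique A hπ.1 fun n => ?_⟩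
  split_ifs with h
  exacts [(hsπ n).symm, hτ n h]

lemma exists_isPath (hA : Prolongs A) : ∃ π, IsPath A.E A.init π := by
  obtain ⟨s, hs⟩ := exists_next hA
  exact ⟨_, isPath_play (σ := s) (τ := s) (fun l v h _ => hs l v h) fun l v h _ => hs l v h⟩

lemma prolongs_of_total (h : A.Total) : Prolongs A := fun _ v _ => h v

lemma nonempty_eve (hA : Prolongs A) : Nonempty {σ : List V → V // A.EveStrat σ} := by
  obtain ⟨π, hπ⟩ := exists_isPath hA
  obtain ⟨s, hs, -⟩ := exists_strat hA hπ
  exact ⟨⟨s, hs⟩⟩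

lemma nonempty_adam (hA : Prolongs A) : Nonempty {σ : List V → V // A.AdamStrat σ} := by
  obtain ⟨π, hπ⟩ := exists_isPath hA
  obtain ⟨s, -, hs, -⟩ := exists_strat hA hπ
  exact ⟨⟨s, hs⟩⟩

lemma abs_MPVal_le {W : ℝ} (hW : ∀ u v, |A.w u v| ≤ W) (π : ℕ → V) : |A.MPVal π| ≤ W :=
  abs_liminf_avg_le (a := wt A.w π) fun _ => hW _ _

lemma cVal_le (hA : Prolongs A) {M : ℝ}
    (h : ∀ π, IsPath A.E A.init π → A.MPVal π ≤ M) : A.cVal A.MPVal ≤ M := by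
  have := nonempty_eve hA
  have := nonempty_adam hA
  exact ciSup_le fun σ => ciSup_le fun τ => h _ (isPath_play σ.2 τ.2)

lemma le_cVal [Finite V] (hA : Prolongs A) {π : ℕ → V} (hπ : IsPath A.E A.init π) :
    A.MPVal π ≤ A.cVal A.MPVal := by
  obtain ⟨W, hW⟩ := exists_bound A.w
  have := nonempty_adam hA
  obtain ⟨s, hs, hs', hsπ⟩ := exists_strat hA hπ
  have hp : A.play s s = π := play_unique A hπ.1 fun n => by simp [hsπ]
  refine le_ciSup_of_le ⟨W, ?_⟩ ⟨s, hs⟩ (le_ciSup_of_le ⟨W, ?_⟩ ⟨s, hs'⟩ (by rw [hp]))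
  · rintro _ ⟨σ, rfl⟩
    exact ciSup_le fun τ => (abs_le.1 (abs_MPVal_le hW _)).2
  · rintro _ ⟨τ, rfl⟩
    exact (abs_le.1 (abs_MPVal_le hW _)).2

/-- The cooperative value is determined by the positional paths. -/
lemma cVal_le_of_positional [Finite V] (hA : Prolongs A) {M : ℝ}
    (h : ∀ π, IsPath A.E A.init π → Positional ∅ π → A.MPVal π ≤ M) :
    A.cVal A.MPVal ≤ M :=
  cVal_le hA fun π hπ => mean_le_of_positional A.w (M := M) h π hπ

end Plays

/-! ### Paths of `Ĝ` -/

section Hat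
variable {V : Type} (A : Arena V)

/-- The edges of `G` compatible with the choices that Adam made in `π 0, …, π i`. -/
def compat (π : ℕ → V) (i : ℕ) : Set (V × V) :=
  {e | A.E e.1 e.2 ∧ ∀ j < i, π j ∉ A.VE → e.1 = π j → e.2 = π (j + 1)}

/-- The path of `Ĝ` above a path of `G`. -/
def lift (π : ℕ → V) (i : ℕ) : V × Set (V × V) := (π i, compat A π i)

/-- The first `n` steps of `π` form a path of `G` from the initial vertex along which Adam never
contradicts an earlier choice. -/
def GoodUpTo (n : ℕ) (π : ℕ → V) : Prop :=
  π 0 = A.init ∧ ∀ i < n, (π i, π (i + 1)) ∈ compat A π i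

/-- `π` is a path of `G` from the initial vertex along which Adam plays positionally. -/
def Good (π : ℕ → V) : Prop := IsPath A.E A.init π ∧ Positional A.VE π

variable {A}

lemma compat_zero (π : ℕ → V) : compat A π 0 = {e | A.E e.1 e.2} := by
  simp [compat]

lemma compat_succ_of_mem {π : ℕ → V} {i : ℕ} (h : π i ∈ A.VE) :
    compat A π (i + 1) = compat A π i := by
  ext e
  refine and_congr_right fun _ => ⟨fun H j hj => H j (by omega), fun H j hj hjV => ?_⟩
  rcases Nat.lt_succ_iff_lt_or_eq.1 hj with hj | rfl
  exacts [H j hj hjV, (hjV h).elim]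

lemma compat_succ_of_notMem {π : ℕ → V} {i : ℕ} (h : π i ∉ A.VE) :
    compat A π (i + 1) = compat A π i \ {e : V × V | e.1 = π i ∧ e.2 ≠ π (i + 1)} := by
  ext e
  constructor
  · rintro ⟨h1, h2⟩
    exact ⟨⟨h1, fun j hj => h2 j (by omega)⟩, fun h3 => h3.2 (h2 i (by omega) h h3.1)⟩
  · rintro ⟨⟨h1, h2⟩, h3⟩
    refine ⟨h1, fun j hj hjV he => ?_⟩
    rcases Nat.lt_succ_iff_lt_or_eq.1 hj with hj | rfl
    · exact h2 j hj hjV he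
    · by_contra hne; exact h3 ⟨he, hne⟩

lemma compat_anti (π : ℕ → V) : Antitone (compat A π) :=
  fun _ _ hij _ he => ⟨he.1, fun j hj => he.2 j (hj.trans_le hij)⟩

lemma compat_congr {π π' : ℕ → V} {i : ℕ} (h : ∀ j ≤ i, π j = π' j) :
    compat A π i = compat A π' i := by
  ext e
  refine and_congr_right fun _ => forall₂_congr fun j hj => ?_
  rw [h j hj.le, h (j + 1) hj]

/-- A one-step extension of the path above `π` in `Ĝ` is the path above an extension of `π`. -/
lemma hat_edge_iff (π : ℕ → V) (i : ℕ) (q : V × Set (V × V)) (hq : q.1 = π (i + 1)) :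
    (hatArenaMem A).E (lift A π i) q ↔
      (π i, π (i + 1)) ∈ compat A π i ∧ q = lift A π (i + 1) := by
  obtain ⟨v, D⟩ := q
  obtain rfl : v = π (i + 1) := hq
  simp only [hatArenaMem, lift, Prod.mk.injEq, true_and]
  refine and_congr_right fun _ => ?_
  by_cases h : π i ∈ A.VE
  · simp [h, compat_succ_of_mem h]
  · simp [h, compat_succ_of_notMem h]

lemma good_iff {π : ℕ → V} : Good A π ↔ ∀ n, GoodUpTo A n π := by
  constructor
  · rintro ⟨⟨h0, hE⟩, hp⟩ n
    exact ⟨h0, fun i _ => ⟨hE i, fun j _ hj he =>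
      hp i j he (by simpa only [show π i = π j from he] using hj)⟩⟩
  · intro h
    have hc : ∀ i, (π i, π (i + 1)) ∈ compat A π i := fun i => (h (i + 1)).2 i (by omega)
    refine ⟨⟨(h 0).1, fun i => (hc i).1⟩, fun i j hij hV => ?_⟩
    rcases lt_trichotomy i j with hlt | rfl | hlt
    · exact ((hc j).2 i hlt hV hij.symm).symm
    · rfl
    · exact (hc i).2 j hlt (hij ▸ hV) hij

/-- Finite paths of `Ĝ` are the lifts of the finite paths of `G` along which Adam is consistent. -/
lemma hat_path_upTo {π' : ℕ → V × Set (V × V)} {n : ℕ}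
    (h0 : π' 0 = (hatArenaMem A).init)
    (h : ∀ i < n, (hatArenaMem A).E (π' i) (π' (i + 1))) :
    GoodUpTo A n (fun i => (π' i).1) ∧ ∀ i ≤ n, π' i = lift A (fun i => (π' i).1) i := by
  have key : ∀ i ≤ n, π' i = lift A (fun i => (π' i).1) i := by
    intro i
    induction i with
    | zero =>
      intro _
      refine Prod.ext rfl ?_
      simp only [lift, compat_zero]
      rw [h0]; rfl
    | succ i ih =>
      intro hi
      have := h i hi
      rw [ih (by omega), hat_edge_iff _ _ _ rfl] at this
      exact this.2
  refine ⟨⟨by simp only [h0]; rfl, fun i hi => ?_⟩, key⟩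
  have := h i hi
  rw [key i hi.le, hat_edge_iff _ _ _ rfl] at this
  exact this.1

lemma hat_isHist_iff {π : ℕ → V} {n : ℕ} :
    (hatArenaMem A).IsHist (pre (lift A π) n) (lift A π n) ↔ GoodUpTo A n π := by
  rw [isHist_pre_iff]
  constructor
  · rintro ⟨h1, h2, -⟩
    exact (hat_path_upTo h2 h1).1
  · rintro ⟨h1, h2⟩
    refine ⟨fun i hi => (hat_edge_iff _ _ _ rfl).2 ⟨h2 i hi, rfl⟩, ?_, rfl⟩
    exact Prod.ext h1 (compat_zero π)

/-- The histories of `Ĝ` are the prefixes of lifts. -/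
lemma exists_lift_of_hat_isHist {l : List (V × Set (V × V))} {p : V × Set (V × V)}
    (h : (hatArenaMem A).IsHist l p) :
    ∃ π n, GoodUpTo A n π ∧ l = pre (lift A π) n ∧ p = lift A π n := by
  obtain ⟨π', n, rfl⟩ := exists_pre_of_isHist _ h
  obtain ⟨h1, h2, rfl⟩ := (isHist_pre_iff _).1 h
  obtain ⟨hg, hl⟩ := hat_path_upTo h2 h1
  exact ⟨_, n, hg, pre_congr hl, hl n le_rfl⟩

/-- The infinite paths of `Ĝ` are the lifts of the paths along which Adam is positional. -/
lemma hat_isPath_iff {π' : ℕ → V × Set (V × V)} :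
    IsPath (hatArenaMem A).E (hatArenaMem A).init π' ↔ ∃ π, Good A π ∧ π' = lift A π := by
  constructor
  · rintro ⟨h0, h⟩
    refine ⟨fun i => (π' i).1, good_iff.2 fun n => (hat_path_upTo h0 fun i _ => h i).1, ?_⟩
    funext n
    exact (hat_path_upTo (n := n) h0 fun i _ => h i).2 n le_rfl
  · rintro ⟨π, hπ, rfl⟩
    rw [good_iff] at hπ
    exact ⟨Prod.ext (hπ 0).1 (compat_zero π), fun i =>
      (hat_edge_iff _ _ _ rfl).2 ⟨(hπ (i + 1)).2 i (by omega), rfl⟩⟩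

lemma GoodUpTo.isHist {π : ℕ → V} {n : ℕ} (h : GoodUpTo A n π) : A.IsHist (pre π n) (π n) :=
  (isHist_pre_iff A).2 ⟨fun i hi => (h.2 i hi).1, h.1, rfl⟩

/-- Compatible edges leave no dead end: at a vertex of Adam visited earlier, his earlier choice
is still available, and at every other vertex nothing was removed. -/
lemma exists_compat (hA : A.Total) {π : ℕ → V} {n : ℕ} (h : GoodUpTo A n π) (u : V) :
    ∃ v, (u, v) ∈ compat A π n := by
  by_cases hu : ∃ j < n, π j ∉ A.VE ∧ u = π j
  · obtain ⟨j, hj, hjV, rfl⟩ := hu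
    refine ⟨π (j + 1), (h.2 j hj).1, fun i hi hiV he => ?_⟩
    simp only at he ⊢
    rcases lt_trichotomy i j with hlt | rfl | hlt
    · exact (h.2 j hj).2 i hlt hiV he
    · rfl
    · exact ((h.2 i hi).2 j hlt hjV he.symm).symm
  · obtain ⟨v, hv⟩ := hA u
    exact ⟨v, hv, fun j hj hjV he => (hu ⟨j, hj, hjV, he⟩).elim⟩

lemma compat_of_mem {π : ℕ → V} {n : ℕ} {u v : V} (hE : A.E u v) (hu : u ∈ A.VE) :
    (u, v) ∈ compat A π n :=
  ⟨hE, fun _ _ hj he => (hj (by rw [← he]; exact hu)).elim⟩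

/-- From the end of a lift, every compatible edge is the first component of an edge of `Ĝ`. -/
lemma hat_succ {π : ℕ → V} {n : ℕ} {v : V} (h : (π n, v) ∈ compat A π n) :
    ∃ q, (hatArenaMem A).E (lift A π n) q ∧ q.1 = v := by
  by_cases hn : π n ∈ A.VE
  · exact ⟨(v, compat A π n), ⟨h, Or.inl ⟨hn, rfl⟩⟩, rfl⟩
  · exact ⟨(v, compat A π n \ {e : V × V | e.1 = π n ∧ e.2 ≠ v}), ⟨h, Or.inr ⟨hn, rfl⟩⟩, rfl⟩

lemma prolongs_hat (hA : A.Total) : Prolongs (hatArenaMem A) := by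
  intro l p hp
  obtain ⟨π, n, hg, rfl, rfl⟩ := exists_lift_of_hat_isHist hp
  obtain ⟨v, hv⟩ := exists_compat hA hg (π n)
  obtain ⟨q, hq, -⟩ := hat_succ hv
  exact ⟨q, hq⟩

/-! ### Transferring Eve's strategies -/

/-- The Eve strategies `σ` in `G` and `σ'` in `Ĝ` are followed by the same paths along which
Adam is positional. -/
def Matched (σ : List V → V) (σ' : List (V × Set (V × V)) → V × Set (V × V)) : Prop :=
  ∀ π, Good A π → (Follows A σ π ↔ Follows (hatArenaMem A) σ' (lift A π))

lemma exists_matched_hat {σ : List V → V} (hσ : A.EveStrat σ) :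
    ∃ σ', (hatArenaMem A).EveStrat σ' ∧ Matched (A := A) σ σ' := by
  have hmap : ∀ (π : ℕ → V) n, (pre (lift A π) n).map Prod.fst = pre π n := by
    intro π n; simp [pre, lift, Function.comp_def]
  refine ⟨fun l => (σ (l.map Prod.fst), (l.getLastD (hatArenaMem A).init).2), ?_, ?_⟩
  · intro l p hp hpV
    obtain ⟨π, n, hg, rfl, rfl⟩ := exists_lift_of_hat_isHist hp
    simp only [hmap, pre_getLastD]
    exact ⟨compat_of_mem (hσ _ _ hg.isHist hpV) hpV, Or.inl ⟨hpV, rfl⟩⟩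
  · intro π hπ
    refine forall_congr' fun i => ?_
    refine forall_congr' fun (hi : π i ∈ A.VE) => ?_
    simp only [hmap, pre_getLastD]
    simp [lift, compat_succ_of_mem hi]

lemma exists_matched (hA : A.Total) {σ' : List (V × Set (V × V)) → V × Set (V × V)}
    (hσ' : (hatArenaMem A).EveStrat σ') :
    ∃ σ, A.EveStrat σ ∧ Matched (A := A) σ σ' := by
  -- the lift of a list, read off from an arbitrary continuation of it
  set L : List V → List (V × Set (V × V)) :=
    fun l => pre (lift A fun i => l.getD i A.init) (l.length - 1) with hL
  have hLpre : ∀ (π : ℕ → V) n, L (pre π n) = pre (lift A π) n := by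
    intro π n
    have hget : ∀ j ≤ n, (pre π n).getD j A.init = π j := by
      intro j hj
      have : j < (pre π n).length := by rw [pre_length]; omega
      simp [List.getD_eq_getElem?_getD, pre, Nat.lt_succ_of_le hj]
    simp only [hL, pre_length, Nat.add_sub_cancel]
    refine pre_congr fun i hi => Prod.ext (hget i hi) ?_
    exact compat_congr fun j hj => hget j (hj.trans hi)
  choose nxt hnxt using hA
  -- on histories where Adam contradicts himself, which have no counterpart in `Ĝ`, any edge will do
  refine ⟨fun l => if A.E (l.getLastD A.init) (σ' (L l)).1 then (σ' (L l)).1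
    else nxt (l.getLastD A.init), ?_, ?_⟩
  · intro l v hl _
    obtain ⟨π, n, rfl⟩ := exists_pre_of_isHist _ hl
    obtain ⟨-, -, rfl⟩ := (isHist_pre_iff A).1 hl
    simp only [pre_getLastD]
    split_ifs with h
    exacts [h, hnxt _]
  · intro π hπ
    refine forall_congr' fun i => ?_
    refine forall_congr' fun (hi : π i ∈ A.VE) => ?_
    have hg := good_iff.1 hπ i
    have hE := hσ' _ _ (hat_isHist_iff.2 hg) hi
    obtain ⟨hE1, hE2 | hE2⟩ := hE
    · have hE1' : A.E (π i) (σ' (pre (lift A π) i)).1 := hE1.1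
      simp only [pre_getLastD, hLpre, if_pos hE1']
      constructor
      · intro h
        exact Prod.ext h ((compat_succ_of_mem hi).trans hE2.2.symm)
      · intro h
        rw [← h]; rfl
    · exact (hE2.1 hi).elim

/-! ### Comparing the payoffs -/

/-- The edges compatible with all choices that Adam makes along `π`. -/
def compatLim (A : Arena V) (π : ℕ → V) : Set (V × V) :=
  {e | A.E e.1 e.2 ∧ ∀ j, π j ∉ A.VE → e.1 = π j → e.2 = π (j + 1)}

/-- Two paths, the second of which is positional for Adam and respects his choices along the
first, are played against one common memoryless Adam strategy. -/
lemma exists_memoryless (hA : A.Total) {π ρ : ℕ → V} (hπ : Good A π)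
    (hρ : IsPath (restrictE A (compatLim A π)).E A.init ρ) (hρ' : Positional ∅ ρ) :
    ∃ τ, A.AdamStrat τ ∧ Memoryless τ ∧ (∀ i, π i ∉ A.VE → π (i + 1) = τ (pre π i)) ∧
      ∀ i, ρ i ∉ A.VE → ρ (i + 1) = τ (pre ρ i) := by
  have : ∀ u, ∃ v, A.E u v ∧ (∀ i, u = π i → π i ∉ A.VE → π (i + 1) = v) ∧
      ∀ i, u = ρ i → ρ i ∉ A.VE → ρ (i + 1) = v := by
    intro u
    by_cases h1 : ∃ i, u = π i ∧ π i ∉ A.VE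
    · obtain ⟨i, rfl, hi⟩ := h1
      exact ⟨π (i + 1), hπ.1.2 i, fun j hj hjV => (hπ.2 i j hj hi).symm,
        fun j hj _ => (hρ.2 j).2 i hi hj.symm⟩
    · by_cases h2 : ∃ i, u = ρ i
      · obtain ⟨i, rfl⟩ := h2
        exact ⟨ρ (i + 1), (hρ.2 i).1, fun j hj hjV => (h1 ⟨j, hj, hjV⟩).elim,
          fun j hj _ => hρ' j i hj.symm (by simp)⟩
      · obtain ⟨v, hv⟩ := hA u
        exact ⟨v, hv, fun j hj hjV => (h1 ⟨j, hj, hjV⟩).elim,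
          fun j hj _ => (h2 ⟨j, hj⟩).elim⟩
  choose f hf using this
  refine ⟨fun l => f (l.getLastD A.init), ?_, ⟨f, ?_⟩, ?_, ?_⟩
  · intro l v hl _
    simp only [List.getLastD_eq_getLast?, hl.2.2]
    exact (hf v).1
  · intro l v hl
    simp only [List.getLastD_eq_getLast?, hl, Option.getD_some]
  · intro i hi
    simp only [pre_getLastD]; exact (hf _).2.1 i rfl hi
  · intro i hi
    simp only [pre_getLastD]; exact (hf _).2.2 i rfl hi

/-- A play against a memoryless Adam strategy is positional for Adam. -/
lemma good_play {σ τ : List V → V} (hσ : A.EveStrat σ) (hτ : A.AdamStrat τ)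
    (hm : Memoryless τ) : Good A (A.play σ τ) := by
  obtain ⟨f, hf⟩ := hm
  refine ⟨isPath_play hσ hτ, fun i j hij hi => ?_⟩
  rw [play_succ, play_succ, if_neg hi, if_neg (hij ▸ hi), hf _ _ (pre_getLast? _ _),
    hf _ _ (pre_getLast? _ _), hij]

/-- All plays against one memoryless Adam strategy respect the choices he makes along any of
them. -/
lemma isPath_compatLim {σ σ₁ τ : List V → V} (hσ₁ : A.EveStrat σ₁)
    (hτ : A.AdamStrat τ) (hm : Memoryless τ) :
    IsPath (restrictE A (compatLim A (A.play σ τ))).E A.init (A.play σ₁ τ) := by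
  obtain ⟨f, hf⟩ := hm
  refine ⟨rfl, fun i => ⟨play_edge hσ₁ hτ i, fun j hj he => ?_⟩⟩
  simp only at he ⊢
  rw [play_succ, play_succ, if_neg hj, if_neg (he ▸ hj), hf _ _ (pre_getLast? _ _),
    hf _ _ (pre_getLast? _ _), he]

variable [Finite V]

lemma compat_eventually (π : ℕ → V) : ∃ N, ∀ n, N ≤ n → compat A π n = compatLim A π := by
  obtain ⟨N, hN⟩ := WellFoundedLT.antitone_chain_condition (compat_anti (A := A) π)
  refine ⟨N, fun n hn => ?_⟩
  rw [← hN n hn]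
  ext e
  refine ⟨fun he => ⟨he.1, fun j => ?_⟩, fun he => ⟨he.1, fun j _ => he.2 j⟩⟩
  have : e ∈ compat A π (max N (j + 1)) := by rw [← hN _ (le_max_left _ _)]; exact he
  exact this.2 j (by omega)

/-- The payoff in `Ĝ` is the negated regret against the best alternative that is compatible with
Adam's choices. -/
lemma MPVal_lift (π : ℕ → V) : (hatArenaMem A).MPVal (lift A π) =
    A.MPVal π - (restrictE A (compatLim A π)).cVal A.MPVal := by
  obtain ⟨W, hW⟩ := exists_bound A.w
  obtain ⟨W', hW'⟩ := exists_bound (hatArenaMem A).w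
  obtain ⟨N, hN⟩ := compat_eventually (A := A) π
  refine liminf_avg_shift (a := wt A.w π) (b := wt (hatArenaMem A).w (lift A π)) (fun _ => hW _ _)
    (fun _ => hW' _ _) N fun i hi => ?_
  change A.w (π i) (π (i + 1)) - (restrictE A (compat A π (i + 1))).cVal
    (restrictE A (compat A π (i + 1))).MPVal = _
  rw [hN (i + 1) (by omega)]
  rfl

lemma total_compatLim (hA : A.Total) {π : ℕ → V} (hπ : Good A π) :
    (restrictE A (compatLim A π)).Total := by
  obtain ⟨N, hN⟩ := compat_eventually (A := A) π
  intro u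
  obtain ⟨v, hv⟩ := exists_compat hA (good_iff.1 hπ N) u
  rw [hN N le_rfl] at hv
  exact ⟨v, hv⟩

/-- The worst regret of an Eve strategy in `G` is the negated worst payoff of any matched
strategy in `Ĝ`. -/
lemma regret_eq_of_matched (hA : A.Total) {σ : List V → V}
    {σ' : List (V × Set (V × V)) → V × Set (V × V)} (hσ : A.EveStrat σ)
    (hσ' : (hatArenaMem A).EveStrat σ') (hm : Matched (A := A) σ σ') :
    (⨆ τ : {τ : List V → V // A.AdamStrat τ ∧ Memoryless τ},
      ((⨆ σ₁ : {σ₁ : List V → V // A.EveStrat σ₁ ∧ True},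
          A.MPVal (A.play σ₁.1 τ.1)) - A.MPVal (A.play σ τ.1))) =
    - ⨅ τ' : {τ' // (hatArenaMem A).AdamStrat τ'},
        (hatArenaMem A).MPVal ((hatArenaMem A).play σ' τ'.1) := by
  obtain ⟨W, hW⟩ := exists_bound A.w
  obtain ⟨W', hW'⟩ := exists_bound (hatArenaMem A).w
  have hMP := fun π => abs_le.1 (abs_MPVal_le hW π)
  have hMP' := fun π => abs_le.1 (abs_MPVal_le hW' π)
  have : Nonempty {σ₁ : List V → V // A.EveStrat σ₁ ∧ True} := ⟨⟨σ, hσ, trivial⟩⟩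
  have : Nonempty {τ : List V → V // A.AdamStrat τ ∧ Memoryless τ} := by
    choose f hf using hA
    refine ⟨fun l => f (l.getLastD A.init), fun l v hl _ => ?_, f, fun l v hl => ?_⟩
    · simp only [List.getLastD_eq_getLast?, hl.2.2]
      exact hf v
    · simp only [List.getLastD_eq_getLast?, hl, Option.getD_some]
  have := nonempty_adam (prolongs_hat hA)
  have hbdd : ∀ τ : List V → V, BddAbove (Set.range
      fun σ₁ : {σ₁ : List V → V // A.EveStrat σ₁ ∧ True} => A.MPVal (A.play σ₁.1 τ)) := by
    rintro τ
    exact ⟨W, by rintro _ ⟨σ₁, rfl⟩; exact (hMP _).2⟩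
  apply le_antisymm
  · refine ciSup_le fun τ => ?_
    obtain ⟨τ, hτ, hτm⟩ := τ
    -- the play against `τ` lifts to `Ĝ`, and every alternative of Eve against `τ` is one of the
    -- paths over which the cooperative value is taken
    have hg := good_play hσ hτ hτm
    obtain ⟨τ', hτ', hplay⟩ := exists_adam (prolongs_hat hA) (hat_isPath_iff.2 ⟨_, hg, rfl⟩)
      ((hm _ hg).1 (follows_play σ τ))
    have h1 : (⨅ τ' : {τ' // (hatArenaMem A).AdamStrat τ'},
        (hatArenaMem A).MPVal ((hatArenaMem A).play σ' τ'.1)) ≤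
        (hatArenaMem A).MPVal ((hatArenaMem A).play σ' τ') :=
      ciInf_le ⟨-W', by rintro _ ⟨τ', rfl⟩; exact (hMP' _).1⟩
        (⟨τ', hτ'⟩ : {τ' // (hatArenaMem A).AdamStrat τ'})
    rw [hplay, MPVal_lift] at h1
    have h2 : (⨆ σ₁ : {σ₁ : List V → V // A.EveStrat σ₁ ∧ True},
          A.MPVal (A.play σ₁.1 τ)) ≤
        (restrictE A (compatLim A (A.play σ τ))).cVal A.MPVal :=
      ciSup_le fun σ₁ => le_cVal (A := restrictE A (compatLim A (A.play σ τ)))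
        (prolongs_of_total (total_compatLim hA hg)) (isPath_compatLim σ₁.2.1 hτ hτm)
    simp only
    linarith
  · rw [neg_le]
    refine le_ciInf fun τ' => ?_
    obtain ⟨π, hg, hplay⟩ := hat_isPath_iff.1 (isPath_play hσ' τ'.2)
    have hfol : Follows A σ π := (hm π hg).2 (hplay ▸ follows_play σ' τ'.1)
    rw [hplay, MPVal_lift]
    rw [neg_le_sub_iff_le_add]
    refine cVal_le_of_positional (A := restrictE A (compatLim A π))
      (prolongs_of_total (total_compatLim hA hg)) fun ρ hρ hρp => ?_
    -- a positional path `ρ` and the play `π` can be met by the same memoryless `τ`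
    obtain ⟨τ, hτ, hτm, hπτ, hρτ⟩ := exists_memoryless hA hg hρ hρp
    obtain ⟨σ₁, hσ₁, hplay₁⟩ := exists_eve (prolongs_of_total hA)
      ⟨hρ.1, fun i => (hρ.2 i).1⟩ hρτ
    have hplay₀ : A.play σ τ = π := play_unique A hg.1.1 fun n => by
      split_ifs with h
      exacts [hfol n h, hπτ n h]
    have h1 := le_ciSup (hbdd τ) ⟨σ₁, hσ₁, trivial⟩
    have h2 := le_ciSup (f := fun τ : {τ : List V → V // A.AdamStrat τ ∧ Memoryless τ} =>
      ((⨆ σ₁ : {σ₁ : List V → V // A.EveStrat σ₁ ∧ True},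
          A.MPVal (A.play σ₁.1 τ.1)) - A.MPVal (A.play σ τ.1)))
      ⟨W + W, by
        rintro _ ⟨τ, rfl⟩
        have h3 : (⨆ σ₁ : {σ₁ : List V → V // A.EveStrat σ₁ ∧ True},
          A.MPVal (A.play σ₁.1 τ.1)) ≤ W := ciSup_le fun σ₁ => (hMP _).2
        have h4 := (hMP (A.play σ τ.1)).1
        simp only
        linarith⟩ ⟨τ, hτ, hτm⟩
    simp only [hplay₁] at h1
    simp only [hplay₀] at h2
    change A.MPVal ρ ≤ _
    linarith

end Hat
end MemRegret

/-- Lemma 8, reg-val-hat. For a weighted arena `G` with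
integer weights, the regret of `G` under the mean-payoff, where Eve is
unrestricted and Adam is restricted to memoryless strategies, equals
`-aVal(Ĝ)`, the negated antagonistic mean-payoff value of `Ĝ`. -/
theorem regret_memoryless_eq_neg_aVal_hat {V : Type} [Fintype V] (A : Arena V)
    (htotal : A.Total)
    (hint : ∀ u v, A.E u v → ∃ k : ℤ, A.w u v = (k : ℝ)) :
    A.regretPP A.MPVal (fun _ => True) Memoryless =
      - (hatArenaMem A).aVal ((hatArenaMem A).MPVal) := by
  rw [Arena.regretPP, Arena.aVal, iInf, iSup, Real.sInf_def]
  -- the worst regrets in `G` and the negated guarantees in `Ĝ` form the same set of reals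
  congr 2
  ext x
  rw [Set.mem_neg]
  constructor
  · rintro ⟨⟨σ, hσ, _⟩, hx⟩
    obtain ⟨σ', hσ', hm⟩ := MemRegret.exists_matched_hat hσ
    exact ⟨⟨σ', hσ'⟩, neg_injective
      ((MemRegret.regret_eq_of_matched htotal hσ hσ' hm).symm.trans hx)⟩
  · rintro ⟨⟨σ', hσ'⟩, rfl⟩
    obtain ⟨σ, hσ, hm⟩ := MemRegret.exists_matched htotal hσ'
    exact ⟨⟨σ, hσ, trivial⟩, MemRegret.regret_eq_of_matched htotal hσ hσ' hm⟩
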